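/- arXiv:1312.1714 — 2 statements merged into one kernel-verified Lean document; each statement's English description precedes it below -/
import Mathlib

section
/- For every ε > 0 there exists a constant C > 0 such that for every integer q > 1 and every positive definite matrix Λ' ∈ M_{2,2}(ℤ) with all entries of absolute value at most 3q², the number of pairs (x,y) ∈ (ℤ³)² satisfying ⟨x,x⟩ = Λ'_{1,1}, ⟨x,y⟩ = Λ'_{1,2}, and ⟨y,y⟩ = Λ'_{2,2} is at most C · q^{ε} · gcd(Λ'_{1,1}, Λ'_{1,2}, Λ'_{2,2}). -/
open Matrix

/-!
A pair `(x, y)` is a `2 × 3` integer matrix `X` with `X Xᵀ = Λ`. Factor `X = T V` with `T` in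
Hermite normal form and `V` having a right inverse. The diagonal entries of `T` divide `det Λ`. Once
they are fixed, differences of admissible off-diagonal entries are killed by `gcd Λ` in a cyclic
group, and this is the only source of the factor `gcd Λ`.

The Gram matrix `G = V Vᵀ` is determined by `T`. Complete the rows of `V` to an integral basis of
determinant one by a vector `w`. In the basis given by the rows of `V`, the orthogonal projection of
`w` to their span is an element of `G⁻¹ ℤ²`. Its class modulo `ℤ²`, which glues the plane lattice to
its orthogonal complement, determines `V` up to the finite group `O₃(ℤ)`. Scaled by `d = det G`, it
becomes a unimodular vector `σ` modulo `d` with `σ σᵀ = -adj G`, and the number of such square roots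
is at most a constant times the square of the number of divisors of `d`. The divisor bound finishes
the proof.
-/

section Counting

theorem encard_le_mul_of_forall_exists_rel {α β : Type*} {s : Set α} {t : Set β} {r : α → β → Prop}
    {n : ℕ∞} (hst : ∀ a ∈ s, ∃ b ∈ t, r a b)
    (hn : ∀ a ∈ s, ∀ b ∈ t, r a b → {a' ∈ s | r a' b}.encard ≤ n) :
    s.encard ≤ n * t.encard := by
  have hfibre (b : β) (hb : b ∈ t) : {a ∈ s | r a b}.encard ≤ n := by
    obtain hempty | ⟨a, ha, hab⟩ := {a ∈ s | r a b}.eq_empty_or_nonempty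
    · exact (Set.encard_eq_zero.mpr hempty).trans_le zero_le
    · exact hn a ha b hb hab
  have hsub : s ⊆ ⋃ b ∈ t, {a ∈ s | r a b} := fun a ha => by
    obtain ⟨b, hb, hab⟩ := hst a ha
    exact Set.mem_biUnion hb ⟨ha, hab⟩
  rcases t.finite_or_infinite with ht | ht
  · lift t to Finset β using ht
    calc s.encard ≤ ∑ b ∈ t, {a ∈ s | r a b}.encard :=
          (Set.encard_le_encard hsub).trans (t.set_encard_biUnion_le _)
      _ ≤ ∑ _b ∈ t, n := Finset.sum_le_sum hfibre
      _ = n * (t : Set β).encard := by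
          rw [Finset.sum_const, Set.encard_coe_eq_coe_finsetCard, nsmul_eq_mul, mul_comm]
  · obtain rfl | hn0 := eq_or_ne n 0
    · have hempty : s = ∅ := Set.subset_empty_iff.mp <| hsub.trans <| by
        simpa [Set.encard_eq_zero] using hfibre
      simp [hempty]
    · simp [ht.encard_eq, ENat.mul_top hn0]

end Counting

section DivisorBound

theorem natCast_add_one_le_mul_pow {t x : ℝ} (ht : 1 < t) (hx : t ≤ x) (k : ℕ) :
    (k + 1 : ℝ) ≤ (1 + 1 / (t - 1)) * x ^ k := by
  have ht' : 0 < t - 1 := sub_pos.mpr ht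
  have hbernoulli : 1 + k * (x - 1) ≤ x ^ k := one_add_mul_sub_le_pow (by linarith) k
  calc (k + 1 : ℝ) ≤ (1 + k * (t - 1)) + (1 / (t - 1) + k) := by
        have : 0 ≤ k * (t - 1) := by positivity
        have : 0 ≤ 1 / (t - 1) := by positivity
        linarith
    _ = (1 + 1 / (t - 1)) * (1 + k * (t - 1)) := by field_simp
    _ ≤ (1 + 1 / (t - 1)) * (1 + k * (x - 1)) := by gcongr
    _ ≤ (1 + 1 / (t - 1)) * x ^ k := by gcongr

theorem natCast_add_one_le_pow {x : ℝ} (hx : 2 ≤ x) (k : ℕ) : (k + 1 : ℝ) ≤ x ^ k :=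
  calc (k + 1 : ℝ) ≤ 2 ^ k := by exact_mod_cast Nat.lt_two_pow_self
    _ ≤ x ^ k := by gcongr

theorem prod_ite_lt_le_pow {R : Type*} [CommSemiring R] [PartialOrder R] [IsOrderedRing R]
    {K : R} (hK : 1 ≤ K) (P : ℕ) (s : Finset ℕ) :
    ∏ p ∈ s, (if p < P then K else 1) ≤ K ^ P := by
  rw [Finset.prod_ite, Finset.prod_const, Finset.prod_const_one, mul_one]
  refine pow_le_pow_right₀ hK ?_
  simpa using Finset.card_le_card (s := {p ∈ s | p < P}) (t := Finset.range P)
    fun p hp => Finset.mem_range.mpr (Finset.mem_filter.mp hp).2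

theorem natCast_rpow_eq_prod_primeFactors {n : ℕ} (hn : n ≠ 0) (δ : ℝ) :
    (n : ℝ) ^ δ = ∏ p ∈ n.primeFactors, ((p : ℝ) ^ δ) ^ n.factorization p := by
  have hcast : (n : ℝ) = ∏ p ∈ n.primeFactors, (p : ℝ) ^ n.factorization p := by
    exact_mod_cast (Nat.prod_factorization_pow_eq_self hn).symm
  rw [hcast, ← Real.finsetProd_rpow _ _ fun p _ => by positivity]
  exact Finset.prod_congr rfl fun p _ => (Real.rpow_pow_comm p.cast_nonneg _ _).symm

theorem exists_card_divisors_le_rpow {δ : ℝ} (hδ : 0 < δ) :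
    ∃ C : ℝ, 0 < C ∧ ∀ n : ℕ, n ≠ 0 → (n.divisors.card : ℝ) ≤ C * (n : ℝ) ^ δ := by
  set K : ℝ := 1 + 1 / ((2 : ℝ) ^ δ - 1)
  set P : ℕ := ⌈(2 : ℝ) ^ (1 / δ)⌉₊
  have htwo : 1 < (2 : ℝ) ^ δ := Real.one_lt_rpow one_lt_two hδ
  have hK : 1 ≤ K := le_add_of_nonneg_right (one_div_pos.mpr (sub_pos.mpr htwo)).le
  have hlocal : ∀ p k : ℕ, p.Prime →
      (k + 1 : ℝ) ≤ (if p < P then K else 1) * ((p : ℝ) ^ δ) ^ k := by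
    intro p k hp
    have hp2 : (2 : ℝ) ≤ p := by exact_mod_cast hp.two_le
    split_ifs with hpP
    · exact natCast_add_one_le_mul_pow htwo (by gcongr) k
    · rw [one_mul]
      refine natCast_add_one_le_pow ?_ k
      have hpP' : (2 : ℝ) ^ (1 / δ) ≤ p := (Nat.le_ceil _).trans (by exact_mod_cast not_lt.mp hpP)
      rwa [one_div, Real.rpow_inv_le_iff_of_pos zero_le_two (by positivity) hδ] at hpP'
  refine ⟨K ^ P, by positivity, fun n hn => ?_⟩
  calc (n.divisors.card : ℝ)
      = ∏ p ∈ n.primeFactors, (n.factorization p + 1 : ℝ) := by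
        rw [Nat.card_divisors hn]; push_cast; rfl
    _ ≤ ∏ p ∈ n.primeFactors, (if p < P then K else 1) * ((p : ℝ) ^ δ) ^ n.factorization p :=
        Finset.prod_le_prod (fun _ _ => by positivity)
          fun p hp => hlocal p _ (Nat.prime_of_mem_primeFactors hp)
    _ ≤ K ^ P * (n : ℝ) ^ δ := by
        rw [Finset.prod_mul_distrib, ← natCast_rpow_eq_prod_primeFactors hn]
        gcongr
        exact prod_ite_lt_le_pow hK P _

end DivisorBound

section GramMatrix

variable {R m n : Type*} [Fintype n]

/-- The integral representations of a quadratic form with Gram matrix `Λ` by a sum of squares: the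
matrices whose rows have the pairwise inner products prescribed by `Λ`. -/
def gramReps [Mul R] [AddCommMonoid R] (Λ : Matrix m m R) : Set (Matrix m n R) :=
  {X | X * Xᵀ = Λ}

theorem sq_apply_le_mul_transpose_apply [CommRing R] [LinearOrder R] [IsStrictOrderedRing R]
    (X : Matrix m n R) (i : m) (j : n) : X i j ^ 2 ≤ (X * Xᵀ) i i :=
  (pow_two (X i j)).trans_le <|
    Finset.single_le_sum (f := fun k => X i k * X i k) (fun _ _ => mul_self_nonneg _)
      (Finset.mem_univ j)

theorem encard_mul_transpose_eq_one_le [Fintype m] [DecidableEq m] :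
    {A : Matrix m n ℤ | A * Aᵀ = 1}.encard ≤ 3 ^ (Fintype.card m * Fintype.card n) := by
  have hIcc : (Set.Icc (-1 : ℤ) 1).encard = 3 := by
    rw [← Finset.coe_Icc, Set.encard_coe_eq_coe_finsetCard]; rfl
  calc {A : Matrix m n ℤ | A * Aᵀ = 1}.encard
      ≤ (Set.univ.pi fun _ : m => Set.univ.pi fun _ : n => Set.Icc (-1 : ℤ) 1).encard := by
        refine Set.encard_le_encard fun A hA i _ j _ => ?_
        refine abs_le.mp ((sq_le_one_iff_abs_le_one _).mp ?_)
        simpa [hA.out] using sq_apply_le_mul_transpose_apply A i j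
    _ = 3 ^ (Fintype.card m * Fintype.card n) := by
        simp only [Set.encard_pi_eq_prod_encard, hIcc, Finset.prod_const, Finset.card_univ,
          ← pow_mul, mul_comm]

theorem exists_eq_mul_of_gram_eq [CommRing R] [DecidableEq n] {M M' : Matrix n n R}
    (hM : IsUnit M.det) (h : M * Mᵀ = M' * M'ᵀ) :
    ∃ A : Matrix n n R, A * Aᵀ = 1 ∧ M' = M * A := by
  refine ⟨M⁻¹ * M', ?_, (mul_nonsing_inv_cancel_left M M' hM).symm⟩
  calc M⁻¹ * M' * (M⁻¹ * M')ᵀ = M⁻¹ * (M' * M'ᵀ) * M⁻¹ᵀ := by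
        simp only [transpose_mul, Matrix.mul_assoc]
    _ = 1 := by
        rw [← h, nonsing_inv_mul_cancel_left M _ hM, ← transpose_mul, nonsing_inv_mul M hM,
          transpose_one]

theorem linearIndependent_row_of_det_gram_ne_zero [CommRing R] [IsDomain R] [Fintype m]
    [DecidableEq m] {X : Matrix m n R} (h : (X * Xᵀ).det ≠ 0) : LinearIndependent R X.row :=
  .of_comp Xᵀ.vecMulLinear (linearIndependent_rows_of_det_ne_zero h)

end GramMatrix

section RankOne

variable {R ι : Type*} [CommRing R] [Fintype ι]

/-- Unimodular vectors, i.e. those whose entries generate the unit ideal; over `ℤ` these are the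
primitive vectors. Stated through a Bézout relation rather than through the ideal itself. -/
def IsUnimodular (v : ι → R) : Prop :=
  ∃ u : ι → R, v ⬝ᵥ u = 1

theorem mul_eq_zero_of_mem_sup_of_mem_inf {I J : Ideal R} (hIJ : I * J = ⊥) {a x : R}
    (ha : a ∈ I ⊔ J) (hx : x ∈ I ⊓ J) : a * x = 0 := by
  have h : a * x ∈ (I ⊔ J) * (I ⊓ J) := Ideal.mul_mem_mul ha hx
  rw [Ideal.sup_mul] at h
  rw [← Ideal.mem_bot, ← hIJ]
  exact sup_le (Ideal.mul_mono_right inf_le_right)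
    ((Ideal.mul_mono_right inf_le_left).trans_eq (mul_comm J I)) h

theorem mul_comm_of_vecMulVec_self_eq {σ τ : ι → R} (hσ : IsUnimodular σ)
    (h : vecMulVec σ σ = vecMulVec τ τ) (i j : ι) : σ i * τ j = τ i * σ j := by
  obtain ⟨u, hu⟩ := hσ
  have hent (i j : ι) : σ i * σ j = τ i * τ j := congr_fun₂ h i j
  calc σ i * τ j = (∑ k, σ k * u k) * (σ i * τ j) := by rw [← dotProduct, hu, one_mul]
    _ = (∑ k, σ k * u k) * (τ i * σ j) := by
        simp only [Finset.sum_mul]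
        refine Finset.sum_congr rfl fun k _ => ?_
        linear_combination u k * (τ j * hent i k - τ i * hent k j)
    _ = τ i * σ j := by rw [← dotProduct, hu, one_mul]

theorem span_sub_mul_span_add_eq_bot {σ τ : ι → R} (hσ : IsUnimodular σ)
    (h : vecMulVec σ σ = vecMulVec τ τ) :
    Ideal.span (Set.range (τ - σ)) * Ideal.span (Set.range (τ + σ)) = ⊥ := by
  rw [Ideal.span_mul_span', eq_bot_iff, Ideal.span_le]
  rintro _ ⟨_, ⟨i, rfl⟩, _, ⟨j, rfl⟩, rfl⟩
  have hent : σ i * σ j = τ i * τ j := congr_fun₂ h i j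
  simp only [Pi.sub_apply, Pi.add_apply, SetLike.mem_coe, Ideal.mem_bot]
  linear_combination -hent - mul_comm_of_vecMulVec_self_eq hσ h i j

theorem two_mem_span_sub_sup_span_add {σ : ι → R} (hσ : IsUnimodular σ) (τ : ι → R) :
    2 ∈ Ideal.span (Set.range (τ - σ)) ⊔ Ideal.span (Set.range (τ + σ)) := by
  obtain ⟨u, hu⟩ := hσ
  have htwo : (2 : R) = ∑ i, u i * ((τ + σ) i - (τ - σ) i) := by
    calc (2 : R) = 2 * ∑ i, σ i * u i := by rw [← dotProduct, hu, mul_one]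
      _ = ∑ i, u i * ((τ + σ) i - (τ - σ) i) := by
        rw [Finset.mul_sum]
        refine Finset.sum_congr rfl fun i _ => ?_
        simp only [Pi.add_apply, Pi.sub_apply]
        ring
  rw [htwo]
  refine Ideal.sum_mem _ fun i _ => Ideal.mul_mem_left _ _ (Ideal.sub_mem _ ?_ ?_)
  · exact Ideal.mem_sup_right (Ideal.subset_span ⟨i, rfl⟩)
  · exact Ideal.mem_sup_left (Ideal.subset_span ⟨i, rfl⟩)

theorem two_mul_sub_eq_zero_of_span_eq {σ τ τ' : ι → R} (hσ : IsUnimodular σ)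
    (hτ : vecMulVec σ σ = vecMulVec τ τ)
    (hsub : Ideal.span (Set.range (τ' - σ)) = Ideal.span (Set.range (τ - σ)))
    (hadd : Ideal.span (Set.range (τ' + σ)) = Ideal.span (Set.range (τ + σ))) (i : ι) :
    2 * (τ' - τ) i = 0 := by
  refine mul_eq_zero_of_mem_sup_of_mem_inf (span_sub_mul_span_add_eq_bot hσ hτ)
    (two_mem_span_sub_sup_span_add hσ τ) ⟨?_, ?_⟩
  · rw [← sub_sub_sub_cancel_right τ' τ σ]
    exact Ideal.sub_mem _ (hsub ▸ Ideal.subset_span ⟨i, rfl⟩) (Ideal.subset_span ⟨i, rfl⟩)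
  · rw [← add_sub_add_right_eq_sub τ' τ σ]
    exact Ideal.sub_mem _ (hadd ▸ Ideal.subset_span ⟨i, rfl⟩) (Ideal.subset_span ⟨i, rfl⟩)

-- A second root `τ` of `σ σᵀ` satisfies `(τ - σ)(τ + σ)ᵀ = 0`, so the ideals `I`, `J` generated by
-- the entries of `τ ∓ σ` have `I J = 0` and `2 ∈ I + J`. They determine `τ` up to `I ∩ J`, which is
-- therefore killed by `2`.
theorem encard_vecMulVec_self_eq_le (M : Matrix ι ι R) :
    {τ : ι → R | IsUnimodular τ ∧ vecMulVec τ τ = M}.encard ≤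
      {x : R | 2 * x = 0}.encard ^ Fintype.card ι * ENat.card (Ideal R) ^ 2 := by
  obtain hempty | ⟨σ, hσ, rfl⟩ :=
    {τ : ι → R | IsUnimodular τ ∧ vecMulVec τ τ = M}.eq_empty_or_nonempty
  · simp [hempty]
  let ideals (τ : ι → R) : Ideal R × Ideal R :=
    (Ideal.span (Set.range (τ - σ)), Ideal.span (Set.range (τ + σ)))
  rw [sq, ← Set.encard_univ, ← Set.encard_prod]
  refine encard_le_mul_of_forall_exists_rel (r := fun τ p => ideals τ = p)
    (fun τ _ => ⟨ideals τ, by simp, rfl⟩) ?_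
  rintro τ ⟨-, hτ⟩ _ - rfl
  have hfibre : {τ' ∈ {τ : ι → R | IsUnimodular τ ∧ vecMulVec τ τ = vecMulVec σ σ} |
      ideals τ' = ideals τ} ⊆ (τ + ·) '' Set.univ.pi fun _ => {x : R | 2 * x = 0} := by
    rintro τ' ⟨-, hideals⟩
    obtain ⟨hsub, hadd⟩ := Prod.mk.inj hideals
    exact ⟨τ' - τ, fun i _ => two_mul_sub_eq_zero_of_span_eq hσ hτ.symm hsub hadd i,
      add_sub_cancel τ τ'⟩
  refine (Set.encard_le_encard hfibre).trans ((Set.encard_image_le _ _).trans_eq ?_)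
  simp [Set.encard_pi_eq_prod_encard]

end RankOne

section ZMod

theorem encard_nsmul_eq_zero_le_zmod {n k : ℕ} [NeZero n] (hk : k ≠ 0) :
    {x : ZMod n | k • x = 0}.encard ≤ k := by
  classical
  have h := IsAddCyclic.card_nsmul_eq_zero_le (α := ZMod n) (Nat.pos_of_ne_zero hk)
  simpa [← Set.encard_coe_eq_coe_finsetCard] using Nat.cast_le (α := ℕ∞).mpr h

theorem card_ideal_zmod_le (n : ℕ) [NeZero n] :
    ENat.card (Ideal (ZMod n)) ≤ n.divisors.card := by
  have hsurj : Function.Surjective (Int.castRingHom (ZMod n)) := ZMod.intCast_surjective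
  have hsub : (Set.univ : Set (Ideal (ZMod n))) ⊆
      (fun m : ℕ => Ideal.span {(m : ZMod n)}) '' n.divisors := by
    rintro I -
    obtain ⟨g, hg⟩ :=
      (IsPrincipalIdealRing.principal (I.comap (Int.castRingHom (ZMod n)))).principal
    rw [Ideal.submodule_span_eq, ← Int.span_natAbs] at hg
    refine ⟨g.natAbs, Nat.mem_divisors.mpr ⟨?_, NeZero.ne n⟩, ?_⟩
    · have hn : (n : ℤ) ∈ I.comap (Int.castRingHom (ZMod n)) := by simp
      rw [hg, Ideal.mem_span_singleton] at hn
      exact_mod_cast hn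
    · have hmap := Ideal.map_comap_of_surjective _ hsurj I
      rw [hg, Ideal.map_span] at hmap
      simpa using hmap
  rw [← Set.encard_univ, ← Set.encard_coe_eq_coe_finsetCard]
  exact (Set.encard_le_encard hsub).trans (Set.encard_image_le _ _)

theorem encard_vecMulVec_self_eq_le_zmod {n : ℕ} [NeZero n] {ι : Type*} [Fintype ι]
    (M : Matrix ι ι (ZMod n)) :
    {τ : ι → ZMod n | IsUnimodular τ ∧ vecMulVec τ τ = M}.encard ≤
      2 ^ Fintype.card ι * n.divisors.card ^ 2 := by
  refine (encard_vecMulVec_self_eq_le M).trans ?_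
  gcongr
  · simpa using encard_nsmul_eq_zero_le_zmod (n := n) two_ne_zero
  · exact card_ideal_zmod_le n

end ZMod

section Glue

variable {R : Type*} [CommRing R]

/-- Matrices whose rows extend to a basis (over a principal ideal domain), encoded by the existence
of a right inverse. -/
def IsRightInvertible {m n : Type*} [DecidableEq m] [Fintype n] (V : Matrix m n R) : Prop :=
  ∃ W : Matrix n m R, V * W = 1

theorem IsRightInvertible.exists_cross_dotProduct_eq_one {V : Matrix (Fin 2) (Fin 3) R}
    (hV : IsRightInvertible V) : ∃ w : Fin 3 → R, V 0 ⨯₃ V 1 ⬝ᵥ w = 1 := by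
  obtain ⟨W, hW⟩ := hV
  have hdot (i j : Fin 2) : V i ⬝ᵥ Wᵀ j = (1 : Matrix (Fin 2) (Fin 2) R) i j := congr_fun₂ hW i j
  exact ⟨Wᵀ 0 ⨯₃ Wᵀ 1, by simp [cross_dot_cross, hdot]⟩

theorem sq_cross_dotProduct (V : Matrix (Fin 2) (Fin 3) R) (w : Fin 3 → R) :
    (V 0 ⨯₃ V 1 ⬝ᵥ w) ^ 2 =
      (V * Vᵀ).det * (w ⬝ᵥ w) - V *ᵥ w ⬝ᵥ adjugate (V * Vᵀ) *ᵥ (V *ᵥ w) := by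
  simp [cross_apply, adjugate_fin_two, det_fin_two, mul_apply, mulVec, dotProduct,
    Fin.sum_univ_succ]
  ring

theorem vecMulVec_adjugate_mulVec_self {G : Matrix (Fin 2) (Fin 2) R} (hG : G.IsSymm)
    (z : Fin 2 → R) :
    vecMulVec (adjugate G *ᵥ z) (adjugate G *ᵥ z) =
      (z ⬝ᵥ adjugate G *ᵥ z) • adjugate G - G.det • adjugate (vecMulVec z z) := by
  ext i j
  fin_cases i <;> fin_cases j <;>
    simp [adjugate_fin_two, det_fin_two, mulVec, dotProduct, vecMulVec, Fin.sum_univ_succ,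
      hG.apply 0 1] <;>
    ring

/-- The coordinates of the orthogonal projection of `w` to the span of the rows of `V`, multiplied
by `det (V Vᵀ)` to clear denominators. If `w` completes the rows to a basis of determinant one, then
its class modulo `det (V Vᵀ)` determines `V` up to orthogonal transformations. -/
def glue (V : Matrix (Fin 2) (Fin 3) R) (w : Fin 3 → R) : Fin 2 → R :=
  adjugate (V * Vᵀ) *ᵥ (V *ᵥ w)

theorem mulVec_dotProduct_glue {V : Matrix (Fin 2) (Fin 3) R} {w : Fin 3 → R}
    (hdet : (V * Vᵀ).det = 0) (hw : V 0 ⨯₃ V 1 ⬝ᵥ w = 1) : V *ᵥ w ⬝ᵥ glue V w = -1 := by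
  have h := sq_cross_dotProduct V w
  rw [hw, hdet] at h
  rw [glue]
  linear_combination h

theorem isUnimodular_glue {V : Matrix (Fin 2) (Fin 3) R} {w : Fin 3 → R}
    (hdet : (V * Vᵀ).det = 0) (hw : V 0 ⨯₃ V 1 ⬝ᵥ w = 1) : IsUnimodular (glue V w) :=
  ⟨-(V *ᵥ w), by rw [dotProduct_neg, dotProduct_comm, mulVec_dotProduct_glue hdet hw, neg_neg]⟩

theorem vecMulVec_glue_self {V : Matrix (Fin 2) (Fin 3) R} {w : Fin 3 → R}
    (hdet : (V * Vᵀ).det = 0) (hw : V 0 ⨯₃ V 1 ⬝ᵥ w = 1) :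
    vecMulVec (glue V w) (glue V w) = -adjugate (V * Vᵀ) := by
  have hsymm : (V * Vᵀ).IsSymm := by rw [IsSymm, transpose_mul, transpose_transpose]
  have hdot : V *ᵥ w ⬝ᵥ adjugate (V * Vᵀ) *ᵥ (V *ᵥ w) = -1 := mulVec_dotProduct_glue hdet hw
  rw [glue, vecMulVec_adjugate_mulVec_self hsymm, hdot, hdet, zero_smul, sub_zero, neg_one_smul]

section Map

variable {S : Type*} [CommRing S] (f : R →+* S) (V : Matrix (Fin 2) (Fin 3) R) (w : Fin 3 → R)

theorem map_cross_dotProduct : V.map f 0 ⨯₃ V.map f 1 ⬝ᵥ (f ∘ w) = f (V 0 ⨯₃ V 1 ⬝ᵥ w) := by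
  simp [cross_apply, dotProduct, Fin.sum_univ_succ]

theorem map_mul_transpose_map : V.map f * (V.map f)ᵀ = (V * Vᵀ).map f := by
  rw [← transpose_map, ← Matrix.map_mul]

theorem glue_map : glue (V.map f) (f ∘ w) = f ∘ glue V w := by
  have hmulVec {m n : Type} [Fintype n] (M : Matrix m n R) (v : n → R) :
      f ∘ (M *ᵥ v) = M.map f *ᵥ (f ∘ v) := funext fun i => RingHom.map_mulVec f M v i
  have hadj : adjugate ((V * Vᵀ).map f) = (adjugate (V * Vᵀ)).map f := (f.map_adjugate _).symm
  rw [glue, glue, map_mul_transpose_map, hadj, hmulVec, hmulVec]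

end Map

theorem gram_vecCons_congr {m : ℕ} {n : Type*} [Fintype n] {V V' : Matrix (Fin m) n R}
    {w w' : n → R} (hw : w ⬝ᵥ w = w' ⬝ᵥ w') (hVw : V *ᵥ w = V' *ᵥ w') (hV : V * Vᵀ = V' * V'ᵀ) :
    of (vecCons w V) * (of (vecCons w V))ᵀ = of (vecCons w' V') * (of (vecCons w' V'))ᵀ := by
  ext i j
  refine Fin.cases (Fin.cases hw (fun j => ?_) j)
    (fun i => Fin.cases (congr_fun hVw i) (congr_fun₂ hV i) j) i
  exact (dotProduct_comm _ _).trans ((congr_fun hVw j).trans (dotProduct_comm _ _))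

theorem det_of_vecCons (V : Matrix (Fin 2) (Fin 3) R) (w : Fin 3 → R) :
    (of (vecCons w V)).det = V 0 ⨯₃ V 1 ⬝ᵥ w := by
  rw [dotProduct_comm, triple_product_eq_det]
  congr 1
  ext i j
  fin_cases i <;> rfl

theorem cross_dotProduct_add_vecMul (V : Matrix (Fin 2) (Fin 3) R) (w : Fin 3 → R)
    (s : Fin 2 → R) : V 0 ⨯₃ V 1 ⬝ᵥ (w + s ᵥ* V) = V 0 ⨯₃ V 1 ⬝ᵥ w := by
  simp [cross_apply, vecMul, dotProduct, Fin.sum_univ_succ]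
  ring

theorem exists_eq_mul_of_det_dvd_glue_sub_glue [IsDomain R] {V V' : Matrix (Fin 2) (Fin 3) R}
    {w w' : Fin 3 → R} (hgram : V * Vᵀ = V' * V'ᵀ) (hdet : (V * Vᵀ).det ≠ 0)
    (hw : V 0 ⨯₃ V 1 ⬝ᵥ w = 1) (hw' : V' 0 ⨯₃ V' 1 ⬝ᵥ w' = 1)
    (hdvd : ∀ i, (V * Vᵀ).det ∣ (glue V w - glue V' w') i) :
    ∃ A : Matrix (Fin 3) (Fin 3) R, A * Aᵀ = 1 ∧ V' = V * A := by
  choose s hs using hdvd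
  replace hs : glue V w - glue V' w' = (V * Vᵀ).det • s := funext hs
  have hdiff : V *ᵥ w - V' *ᵥ w' = (V * Vᵀ) *ᵥ s := by
    refine smul_right_injective _ hdet ?_
    calc (V * Vᵀ).det • (V *ᵥ w - V' *ᵥ w')
        = (V * Vᵀ) *ᵥ (glue V w - glue V' w') := by
          rw [glue, glue, ← hgram, ← mulVec_sub, mulVec_mulVec, mul_adjugate, smul_mulVec,
            one_mulVec]
      _ = (V * Vᵀ).det • ((V * Vᵀ) *ᵥ s) := by rw [hs, mulVec_smul]
  -- Translating by a combination of the rows makes the Gram matrices of both bases agree.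
  set w'' := w' + s ᵥ* V'
  have hVw : V *ᵥ w = V' *ᵥ w'' := by
    rw [mulVec_add, ← mulVec_transpose, mulVec_mulVec, ← hgram, ← hdiff, add_sub_cancel]
  have hw'' : V' 0 ⨯₃ V' 1 ⬝ᵥ w'' = 1 := (cross_dotProduct_add_vecMul V' w' s).trans hw'
  have hww : w ⬝ᵥ w = w'' ⬝ᵥ w'' := by
    have h := sq_cross_dotProduct V w
    have h'' := sq_cross_dotProduct V' w''
    rw [hw, hVw, hgram] at h
    rw [hw''] at h''
    exact mul_left_cancel₀ (hgram ▸ hdet) (by linear_combination h'' - h)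
  obtain ⟨A, hA, hVA⟩ := exists_eq_mul_of_gram_eq
    (by rw [det_of_vecCons, hw]; exact isUnit_one) (gram_vecCons_congr hww hVw hgram)
  exact ⟨A, hA, Matrix.ext fun i => congr_fun₂ hVA i.succ⟩

theorem encard_isRightInvertible_gramReps_le {G : Matrix (Fin 2) (Fin 2) ℤ} (hG : G.det ≠ 0) :
    {V ∈ (gramReps G : Set (Matrix (Fin 2) (Fin 3) ℤ)) | IsRightInvertible V}.encard ≤
      3 ^ 9 * (2 ^ 2 * G.det.natAbs.divisors.card ^ 2) := by
  set d := G.det.natAbs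
  have : NeZero d := ⟨Int.natAbs_ne_zero.mpr hG⟩
  let f := Int.castRingHom (ZMod d)
  have hf (a : ℤ) : f a = 0 ↔ G.det ∣ a := by
    rw [eq_intCast, ZMod.intCast_zmod_eq_zero_iff_dvd, Int.natCast_natAbs, abs_dvd]
  set T : Set (Fin 2 → ZMod d) := {τ | IsUnimodular τ ∧ vecMulVec τ τ = -adjugate (G.map f)}
  have hT : T.encard ≤ 2 ^ 2 * d.divisors.card ^ 2 := encard_vecMulVec_self_eq_le_zmod _
  refine (encard_le_mul_of_forall_exists_rel (t := T) (n := 3 ^ 9)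
    (r := fun V τ => ∃ w, V 0 ⨯₃ V 1 ⬝ᵥ w = 1 ∧ f ∘ glue V w = τ) ?_ ?_).trans (by gcongr)
  · rintro V ⟨rfl, hV⟩
    obtain ⟨w, hw⟩ := hV.exists_cross_dotProduct_eq_one
    have hmapw : V.map f 0 ⨯₃ V.map f 1 ⬝ᵥ (f ∘ w) = 1 := by
      rw [map_cross_dotProduct, hw, map_one]
    have hmapdet : (V.map f * (V.map f)ᵀ).det = 0 := by
      rw [map_mul_transpose_map, ← RingHom.mapMatrix_apply, ← RingHom.map_det, hf]
    refine ⟨f ∘ glue V w, ?_, w, hw, rfl⟩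
    rw [← glue_map]
    exact ⟨isUnimodular_glue hmapdet hmapw,
      (vecMulVec_glue_self hmapdet hmapw).trans (by rw [map_mul_transpose_map])⟩
  · rintro V ⟨rfl, -⟩ _ - ⟨w, hw, rfl⟩
    calc _ ≤ ((V * ·) '' {A : Matrix (Fin 3) (Fin 3) ℤ | A * Aᵀ = 1}).encard := by
          refine Set.encard_le_encard ?_
          rintro V' ⟨⟨hV', -⟩, w', hw', hglue⟩
          obtain ⟨A, hA, rfl⟩ := exists_eq_mul_of_det_dvd_glue_sub_glue hV'.symm hG hw hw'
            fun i => (hf _).mp (by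
              rw [Pi.sub_apply, map_sub, sub_eq_zero]; exact (congr_fun hglue i).symm)
          exact ⟨A, hA, rfl⟩
      _ ≤ {A : Matrix (Fin 3) (Fin 3) ℤ | A * Aᵀ = 1}.encard := Set.encard_image_le _ _
      _ ≤ 3 ^ 9 := encard_mul_transpose_eq_one_le

end Glue

section Hermite

theorem exists_eq_smul_isUnimodular {ι : Type*} [Fintype ι] {x : ι → ℤ} (hx : x ≠ 0) :
    ∃ (e : ℕ) (v : ι → ℤ), IsUnimodular v ∧ x = (e : ℤ) • v := by
  obtain ⟨g, hg⟩ := (IsPrincipalIdealRing.principal (Ideal.span (Set.range x))).principal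
  rw [Ideal.submodule_span_eq, ← Int.span_natAbs] at hg
  have hdvd (i : ι) : (g.natAbs : ℤ) ∣ x i := by
    rw [← Ideal.mem_span_singleton, ← hg]
    exact Ideal.subset_span ⟨i, rfl⟩
  choose v hv using hdvd
  have hxv : x = (g.natAbs : ℤ) • v := funext hv
  have hg0 : (g.natAbs : ℤ) ≠ 0 := fun h => hx (by rw [hxv, h, zero_smul])
  obtain ⟨u, hu⟩ := Ideal.mem_span_range_iff_exists_fun.mp
    (hg ▸ Ideal.mem_span_singleton_self (g.natAbs : ℤ))
  refine ⟨g.natAbs, v, ⟨u, mul_left_cancel₀ hg0 ?_⟩, hxv⟩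
  calc (g.natAbs : ℤ) * (v ⬝ᵥ u) = x ⬝ᵥ u := by rw [← smul_eq_mul, ← smul_dotProduct, ← hxv]
    _ = g.natAbs * 1 := by rw [mul_one, dotProduct_comm]; exact hu

/-- The `2 × 2` matrices in lower triangular Hermite normal form. The reduction condition `f < h` is
not part of the definition. -/
def hermite (e f h : ℕ) : Matrix (Fin 2) (Fin 2) ℤ :=
  !![(e : ℤ), 0; (f : ℤ), (h : ℤ)]

theorem det_hermite (e f h : ℕ) : (hermite e f h).det = e * h := by
  simp [hermite, det_fin_two]

theorem isRightInvertible_of_dotProduct_eq {R ι : Type*} [CommRing R] [Fintype ι]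
    {v n r t : ι → R} (hvr : v ⬝ᵥ r = 1) (hnr : n ⬝ᵥ r = 0) (hnt : n ⬝ᵥ t = 1) (k : R) :
    IsRightInvertible (of ![v, n + k • v]) := by
  set t' := t - (v ⬝ᵥ t) • r with ht'
  have hvt' : v ⬝ᵥ t' = 0 := by simp [ht', dotProduct_sub, hvr]
  have hnt' : n ⬝ᵥ t' = 1 := by simp [ht', dotProduct_sub, hnt, hnr]
  refine ⟨(of ![r - k • t', t'])ᵀ, ?_⟩
  ext i j
  change ![v, n + k • v] i ⬝ᵥ ![r - k • t', t'] j = _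
  fin_cases i <;> fin_cases j <;>
    simp [dotProduct_sub, hvr, hvt', hnr, hnt']

theorem sub_smul_ne_zero_of_linearIndependent {R M : Type*} [CommRing R] [Nontrivial R]
    [AddCommGroup M] [Module R M] {x : Fin 2 → M} (hx : LinearIndependent R x) {e : R} {v : M}
    (hv : x 0 = e • v) (c : R) : x 1 - c • v ≠ 0 := by
  intro h
  have hrel : (-c) • x 0 + e • x 1 = 0 := by
    rw [hv, sub_eq_zero.mp h, smul_smul, smul_smul, ← add_smul, mul_comm e,
      neg_mul, neg_add_cancel, zero_smul]
  have he : e = 0 := Fintype.linearIndependent_iff.mp hx ![-c, e] (by simpa using hrel) 1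
  exact hx.ne_zero 0 (by rw [hv, he, zero_smul])

theorem hermite_mul {ι : Type*} (e f h : ℕ) (v w : ι → ℤ) :
    hermite e f h * of ![v, w] = of ![(e : ℤ) • v, (f : ℤ) • v + (h : ℤ) • w] := by
  ext i j
  rw [Matrix.mul_apply, Fin.sum_univ_two]
  fin_cases i <;> simp [hermite]

theorem exists_eq_hermite_mul_isRightInvertible {ι : Type*} [Fintype ι] {X : Matrix (Fin 2) ι ℤ}
    (hX : LinearIndependent ℤ X.row) :
    ∃ e f h : ℕ, f < h ∧
      ∃ V : Matrix (Fin 2) ι ℤ, IsRightInvertible V ∧ X = hermite e f h * V := by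
  obtain ⟨e, v, ⟨r, hvr⟩, hx : X 0 = (e : ℤ) • v⟩ := exists_eq_smul_isUnimodular (hX.ne_zero 0)
  set c := X 1 ⬝ᵥ r with hc
  have hne : X 1 - c • v ≠ 0 := sub_smul_ne_zero_of_linearIndependent hX hx c
  obtain ⟨h, n, ⟨t, hnt⟩, hn⟩ := exists_eq_smul_isUnimodular hne
  have hh : (h : ℤ) ≠ 0 := fun h0 => hne (by rw [hn, h0, zero_smul])
  have hnr : n ⬝ᵥ r = 0 := by
    refine (mul_eq_zero.mp ?_).resolve_left hh
    rw [← smul_eq_mul, ← smul_dotProduct, ← hn, sub_dotProduct, smul_dotProduct, hvr, smul_eq_mul,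
      mul_one, hc, sub_self]
  obtain ⟨f, hf⟩ := Int.eq_ofNat_of_zero_le (Int.emod_nonneg c hh)
  have hfh : f < h := by
    have := Int.emod_lt_of_pos c (by omega : 0 < (h : ℤ))
    omega
  have hdiv : (f : ℤ) + h * (c / h) = c := hf ▸ Int.emod_add_mul_ediv c h
  refine ⟨e, f, h, hfh, _, isRightInvertible_of_dotProduct_eq hvr hnr hnt (c / h), ?_⟩
  rw [hermite_mul, ← hx, smul_add, ← hn, smul_smul, add_left_comm, ← add_smul, hdiv,
    sub_add_cancel]
  ext i j
  fin_cases i <;> rfl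

/-- The content of the symmetric matrix `Λ`, i.e. the gcd of its entries; the lower left entry is
left out as it repeats `Λ 0 1`. -/
def content (Λ : Matrix (Fin 2) (Fin 2) ℤ) : ℕ :=
  Int.gcd (Int.gcd (Λ 0 0) (Λ 0 1)) (Λ 1 1)

theorem content_ne_zero {Λ : Matrix (Fin 2) (Fin 2) ℤ} (hΛ : Λ.det ≠ 0) : content Λ ≠ 0 := by
  intro h
  obtain ⟨h₀, -⟩ := Int.gcd_eq_zero_iff.mp h
  obtain ⟨h₀₀, h₀₁⟩ := Int.gcd_eq_zero_iff.mp (Int.natCast_eq_zero.mp h₀)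
  exact hΛ (by rw [det_fin_two, h₀₀, h₀₁]; ring)

theorem content_nsmul_eq_zero {A : Type*} [AddGroup A] {Λ : Matrix (Fin 2) (Fin 2) ℤ} {x : A}
    (h₀₀ : Λ 0 0 • x = 0) (h₀₁ : Λ 0 1 • x = 0) (h₁₁ : Λ 1 1 • x = 0) : content Λ • x = 0 := by
  rw [← addOrderOf_dvd_iff_zsmul_eq_zero] at h₀₀ h₀₁ h₁₁
  rw [← natCast_zsmul, ← addOrderOf_dvd_iff_zsmul_eq_zero]
  exact Int.dvd_coe_gcd (Int.dvd_coe_gcd h₀₀ h₀₁) h₁₁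

/-- The Hermite normal forms `T`, recorded by their entries `(e, f, h)`, such that `Λ = T G Tᵀ` for
an integral matrix `G`: the possible left factors in representations `X = T V` of `Λ`. -/
def hermiteFactors (Λ : Matrix (Fin 2) (Fin 2) ℤ) : Set (ℕ × ℕ × ℕ) :=
  {(e, f, h) : ℕ × ℕ × ℕ | f < h ∧
    ∃ G : Matrix (Fin 2) (Fin 2) ℤ, hermite e f h * G * (hermite e f h)ᵀ = Λ}

theorem det_eq_of_hermite_mul {e f h : ℕ} {G Λ : Matrix (Fin 2) (Fin 2) ℤ}
    (hG : hermite e f h * G * (hermite e f h)ᵀ = Λ) : Λ.det = (e * h) ^ 2 * G.det := by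
  rw [← hG, det_mul, det_mul, det_transpose, det_hermite]
  ring

theorem hermite_mul_mul_transpose (e f h : ℕ) (G : Matrix (Fin 2) (Fin 2) ℤ) :
    hermite e f h * G * (hermite e f h)ᵀ =
      !![e ^ 2 * G 0 0, e * (f * G 0 0 + h * G 0 1);
        e * (f * G 0 0 + h * G 1 0),
        f * (f * G 0 0 + h * G 0 1) + h * (f * G 1 0 + h * G 1 1)] := by
  ext i j
  fin_cases i <;> fin_cases j <;>
    simp [hermite, mul_apply, vecMul, dotProduct, Fin.sum_univ_two] <;> ring

theorem content_nsmul_natCast_sub_natCast_eq_zero {e f f' h : ℕ} (he : e ≠ 0)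
    {G G' Λ : Matrix (Fin 2) (Fin 2) ℤ} (hG : hermite e f h * G * (hermite e f h)ᵀ = Λ)
    (hG' : hermite e f' h * G' * (hermite e f' h)ᵀ = Λ) :
    content Λ • ((f : ZMod h) - f') = 0 := by
  have he' : (e : ℤ) ≠ 0 := by exact_mod_cast he
  have hdvd {a : ℤ} (ha : (h : ℤ) ∣ a * (f - f')) : a • ((f : ZMod h) - f') = 0 := by
    rw [← ZMod.intCast_zmod_eq_zero_iff_dvd] at ha
    simpa [zsmul_eq_mul] using ha
  set B := f * G 0 0 + h * G 0 1
  set B' := f' * G' 0 0 + h * G' 0 1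
  rw [hermite_mul_mul_transpose] at hG hG'
  have h₀₀ : e ^ 2 * G 0 0 = Λ 0 0 := congr_fun₂ hG 0 0
  have h₀₁ : e * B = Λ 0 1 := congr_fun₂ hG 0 1
  have h₁₁ : f * B + h * (f * G 1 0 + h * G 1 1) = Λ 1 1 := congr_fun₂ hG 1 1
  have h₁₁' : f' * B' + h * (f' * G' 1 0 + h * G' 1 1) = Λ 1 1 := congr_fun₂ hG' 1 1
  have hα : G 0 0 = G' 0 0 :=
    mul_left_cancel₀ (pow_ne_zero 2 he') (h₀₀.trans (congr_fun₂ hG' 0 0).symm)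
  have hB : B = B' := mul_left_cancel₀ he' (h₀₁.trans (congr_fun₂ hG' 0 1).symm)
  have hα_dvd : (h : ℤ) ∣ G 0 0 * (f - f') :=
    ⟨G' 0 1 - G 0 1, by linear_combination hB - f' * hα⟩
  have hB_dvd : (h : ℤ) ∣ B * (f - f') :=
    ⟨f' * G' 1 0 + h * G' 1 1 - (f * G 1 0 + h * G 1 1),
      by linear_combination h₁₁ - h₁₁' - f' * hB⟩
  refine content_nsmul_eq_zero (hdvd ?_) (hdvd ?_) (hdvd ?_)
  · rw [← h₀₀, mul_assoc]
    exact hα_dvd.mul_left _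
  · rw [← h₀₁, mul_assoc]
    exact hB_dvd.mul_left _
  · rw [← h₁₁, add_mul, mul_assoc, mul_assoc]
    exact dvd_add (hB_dvd.mul_left _) (dvd_mul_right _ _)

theorem encard_setOf_mem_hermiteFactors_le {Λ : Matrix (Fin 2) (Fin 2) ℤ} (hΛ : Λ.det ≠ 0)
    {e : ℕ} (he : e ≠ 0) (h : ℕ) :
    {f | (e, f, h) ∈ hermiteFactors Λ}.encard ≤ content Λ := by
  obtain hempty | ⟨f₀, hf₀, G₀, hG₀⟩ := {f | (e, f, h) ∈ hermiteFactors Λ}.eq_empty_or_nonempty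
  · exact (Set.encard_eq_zero.mpr hempty).trans_le zero_le
  have : NeZero h := ⟨(f₀.zero_le.trans_lt hf₀).ne'⟩
  calc {f | (e, f, h) ∈ hermiteFactors Λ}.encard
      ≤ {x : ZMod h | content Λ • x = 0}.encard := by
        refine Set.encard_le_encard_of_injOn (f := fun f => (f : ZMod h) - f₀) ?_ ?_
        · rintro f ⟨-, G, hG⟩
          exact content_nsmul_natCast_sub_natCast_eq_zero he hG hG₀
        · rintro f ⟨hf, -⟩ f' ⟨hf', -⟩ hff'
          have hmod := (ZMod.natCast_eq_natCast_iff' f f' h).mp (sub_left_injective hff')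
          rwa [Nat.mod_eq_of_lt hf, Nat.mod_eq_of_lt hf'] at hmod
    _ ≤ content Λ := encard_nsmul_eq_zero_le_zmod (content_ne_zero hΛ)

theorem encard_hermiteFactors_le {Λ : Matrix (Fin 2) (Fin 2) ℤ} (hΛ : Λ.det ≠ 0) :
    (hermiteFactors Λ).encard ≤ content Λ * Λ.det.natAbs.divisors.card ^ 2 := by
  set D := Λ.det.natAbs.divisors
  have hD : ((D : Set ℕ) ×ˢ (D : Set ℕ)).encard = D.card ^ 2 := by
    rw [Set.encard_prod, Set.encard_coe_eq_coe_finsetCard, sq]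
  rw [← hD]
  refine encard_le_mul_of_forall_exists_rel (r := fun p q => (p.1, p.2.2) = q) ?_ ?_
  · rintro ⟨e, f, h⟩ ⟨-, G, hG⟩
    have hdvd : ((e * h : ℕ) : ℤ) ∣ Λ.det := by
      rw [det_eq_of_hermite_mul hG, sq, mul_assoc]
      push_cast
      exact dvd_mul_right _ _
    have hdvd' : e * h ∣ Λ.det.natAbs := Int.natCast_dvd.mp hdvd
    have hΛ' : Λ.det.natAbs ≠ 0 := Int.natAbs_ne_zero.mpr hΛ
    exact ⟨_, ⟨Nat.mem_divisors.mpr ⟨dvd_of_mul_right_dvd hdvd', hΛ'⟩,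
      Nat.mem_divisors.mpr ⟨dvd_of_mul_left_dvd hdvd', hΛ'⟩⟩, rfl⟩
  · rintro - - ⟨e, h⟩ ⟨he, -⟩ -
    have hfibre : {p ∈ hermiteFactors Λ | (p.1, p.2.2) = (e, h)} ⊆
        (fun f => (e, f, h)) '' {f | (e, f, h) ∈ hermiteFactors Λ} := by
      rintro ⟨e, f, h⟩ ⟨hp, ⟨⟩⟩
      exact ⟨f, hp, rfl⟩
    exact (Set.encard_le_encard hfibre).trans ((Set.encard_image_le _ _).trans
      (encard_setOf_mem_hermiteFactors_le hΛ (Nat.pos_of_mem_divisors he).ne' h))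

end Hermite

section Total

theorem eq_of_mul_mul_transpose_eq {n R : Type*} [Fintype n] [DecidableEq n] [CommRing R]
    [IsDomain R] {T G G' : Matrix n n R} (hT : T.det ≠ 0) (h : T * G * Tᵀ = T * G' * Tᵀ) :
    G = G' := by
  have hreg {M : Matrix n n R} (hM : M.det ≠ 0) : IsRegular M :=
    isRegular_of_isLeftRegular_det (IsLeftCancelMulZero.mul_left_cancel_of_ne_zero hM)
  exact (hreg hT).left ((hreg (T.det_transpose.trans_ne hT)).right h)

theorem encard_gramReps_inter_mul_le (T : Matrix (Fin 2) (Fin 2) ℤ)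
    {Λ : Matrix (Fin 2) (Fin 2) ℤ} (hΛ : Λ.det ≠ 0) :
    {X ∈ (gramReps Λ : Set (Matrix (Fin 2) (Fin 3) ℤ)) |
      ∃ V : Matrix (Fin 2) (Fin 3) ℤ, IsRightInvertible V ∧ X = T * V}.encard ≤
        3 ^ 9 * (2 ^ 2 * Λ.det.natAbs.divisors.card ^ 2) := by
  obtain hempty | ⟨_, hX₀, V₀, -, rfl⟩ := {X ∈ (gramReps Λ : Set (Matrix (Fin 2) (Fin 3) ℤ)) |
      ∃ V : Matrix (Fin 2) (Fin 3) ℤ, IsRightInvertible V ∧ X = T * V}.eq_empty_or_nonempty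
  · exact (Set.encard_eq_zero.mpr hempty).trans_le zero_le
  set G := V₀ * V₀ᵀ
  have hgram (V : Matrix (Fin 2) (Fin 3) ℤ) : T * V * (T * V)ᵀ = T * (V * Vᵀ) * Tᵀ := by
    simp only [transpose_mul, Matrix.mul_assoc]
  have hTG : T * G * Tᵀ = Λ := (hgram V₀).symm.trans hX₀
  have hdet : Λ.det = T.det * T.det * G.det := by
    rw [← hTG, det_mul, det_mul, det_transpose]
    ring
  obtain ⟨hTT, hG⟩ := mul_ne_zero_iff.mp (hdet ▸ hΛ)
  have hT : T.det ≠ 0 := left_ne_zero_of_mul hTT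
  have hdivisors : G.det.natAbs.divisors ⊆ Λ.det.natAbs.divisors :=
    Nat.divisors_subset_of_dvd (Int.natAbs_ne_zero.mpr hΛ)
      (Int.natAbs_dvd_natAbs.mpr (hdet ▸ dvd_mul_left _ _))
  have hsub : {X ∈ (gramReps Λ : Set (Matrix (Fin 2) (Fin 3) ℤ)) |
      ∃ V : Matrix (Fin 2) (Fin 3) ℤ, IsRightInvertible V ∧ X = T * V} ⊆
        (T * ·) '' {V ∈ gramReps G | IsRightInvertible V} := by
    rintro _ ⟨hX, V, hV, rfl⟩
    exact ⟨V, ⟨eq_of_mul_mul_transpose_eq hT ((hgram V).symm.trans (hX.out.trans hTG.symm)), hV⟩,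
      rfl⟩
  refine (Set.encard_le_encard hsub).trans ((Set.encard_image_le _ _).trans
    ((encard_isRightInvertible_gramReps_le hG).trans ?_))
  gcongr

theorem encard_gramReps_le {Λ : Matrix (Fin 2) (Fin 2) ℤ} (hΛ : Λ.det ≠ 0) :
    (gramReps Λ : Set (Matrix (Fin 2) (Fin 3) ℤ)).encard ≤
      3 ^ 9 * 2 ^ 2 * Λ.det.natAbs.divisors.card ^ 4 * content Λ := by
  set D := Λ.det.natAbs.divisors.card with hD
  calc (gramReps Λ : Set (Matrix (Fin 2) (Fin 3) ℤ)).encard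
      ≤ 3 ^ 9 * (2 ^ 2 * D ^ 2) * (hermiteFactors Λ).encard := by
        refine encard_le_mul_of_forall_exists_rel
          (r := fun X p => ∃ V : Matrix (Fin 2) (Fin 3) ℤ,
            IsRightInvertible V ∧ X = hermite p.1 p.2.1 p.2.2 * V) ?_ ?_
        · rintro X rfl
          obtain ⟨e, f, h, hfh, V, hV, rfl⟩ :=
            exists_eq_hermite_mul_isRightInvertible (linearIndependent_row_of_det_gram_ne_zero hΛ)
          exact ⟨(e, f, h),
            ⟨hfh, V * Vᵀ, by simp only [transpose_mul, Matrix.mul_assoc]⟩, V, hV, rfl⟩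
        · rintro - - ⟨e, f, h⟩ - -
          exact encard_gramReps_inter_mul_le (hermite e f h) hΛ
    _ ≤ 3 ^ 9 * (2 ^ 2 * D ^ 2) * (content Λ * D ^ 2) := by
        gcongr
        exact encard_hermiteFactors_le hΛ
    _ = 3 ^ 9 * 2 ^ 2 * D ^ 4 * content Λ := by ring

theorem exists_ncard_gramReps_le_rpow {ε : ℝ} (hε : 0 < ε) :
    ∃ C : ℝ, 0 < C ∧ ∀ Λ : Matrix (Fin 2) (Fin 2) ℤ, Λ.det ≠ 0 →
      ((gramReps Λ : Set (Matrix (Fin 2) (Fin 3) ℤ)).ncard : ℝ) ≤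
        C * (Λ.det.natAbs : ℝ) ^ ε * content Λ := by
  obtain ⟨C, hC, hdivisors⟩ := exists_card_divisors_le_rpow (div_pos hε four_pos)
  refine ⟨3 ^ 9 * 2 ^ 2 * C ^ 4, by positivity, fun Λ hΛ => ?_⟩
  set D := Λ.det.natAbs
  have hncard : (gramReps Λ : Set (Matrix (Fin 2) (Fin 3) ℤ)).ncard ≤
      3 ^ 9 * 2 ^ 2 * D.divisors.card ^ 4 * content Λ :=
    ENat.toNat_le_of_le_natCast (by exact_mod_cast encard_gramReps_le hΛ)
  calc ((gramReps Λ : Set (Matrix (Fin 2) (Fin 3) ℤ)).ncard : ℝ)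
      ≤ 3 ^ 9 * 2 ^ 2 * (D.divisors.card : ℝ) ^ 4 * content Λ := by exact_mod_cast hncard
    _ ≤ 3 ^ 9 * 2 ^ 2 * (C * (D : ℝ) ^ (ε / 4)) ^ 4 * content Λ := by
        gcongr
        exact hdivisors D (Int.natAbs_ne_zero.mpr hΛ)
    _ = 3 ^ 9 * 2 ^ 2 * C ^ 4 * (D : ℝ) ^ ε * content Λ := by
        have hexp : ε / 4 * (4 : ℕ) = ε := by push_cast; ring
        rw [mul_pow, ← Real.rpow_mul_natCast D.cast_nonneg, hexp]
        ring

theorem det_pos_of_posDef {R : Type*} [CommRing R] [LinearOrder R] [IsStrictOrderedRing R]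
    [StarRing R] [TrivialStar R] {A : Matrix (Fin 2) (Fin 2) R} (hA : A.PosDef) : 0 < A.det := by
  have h₀₀ : 0 < A 0 0 := hA.diag_pos
  have hsymm : A 1 0 = A 0 1 := (isHermitian_iff_isSymm.mp hA.isHermitian).apply 0 1
  have hne : ![-A 0 1, A 0 0] ≠ 0 := fun h => h₀₀.ne' (by simpa using congrFun h 1)
  refine pos_of_mul_pos_right ?_ h₀₀.le
  convert hA.dotProduct_mulVec_pos hne using 1
  simp [mulVec, dotProduct, Fin.sum_univ_two, det_fin_two, hsymm]
  ring

theorem det_le_mul_diag_of_isSymm {R : Type*} [CommRing R] [LinearOrder R] [IsStrictOrderedRing R]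
    {A : Matrix (Fin 2) (Fin 2) R} (hA : A.IsSymm) : A.det ≤ A 0 0 * A 1 1 := by
  rw [det_fin_two, hA.apply 0 1]
  exact sub_le_self _ (mul_self_nonneg _)

theorem det_natAbs_le_pow_eight {A : Matrix (Fin 2) (Fin 2) ℤ} (hA : A.PosDef) {q : ℕ}
    (hq : 1 < q) (hAq : ∀ i j, |A i j| ≤ 3 * (q : ℤ) ^ 2) : A.det.natAbs ≤ q ^ 8 := by
  have hsymm : A.IsSymm := isHermitian_iff_isSymm.mp hA.isHermitian
  have hq' : (2 : ℤ) ≤ q := by exact_mod_cast hq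
  zify
  calc |A.det| = A.det := abs_of_pos (det_pos_of_posDef hA)
    _ ≤ A 0 0 * A 1 1 := det_le_mul_diag_of_isSymm hsymm
    _ ≤ 3 * (q : ℤ) ^ 2 * (3 * (q : ℤ) ^ 2) :=
        mul_le_mul (abs_le.mp (hAq 0 0)).2 (abs_le.mp (hAq 1 1)).2 hA.diag_pos.le (by positivity)
    _ ≤ 2 ^ 4 * (q : ℤ) ^ 4 := by linarith [pow_nonneg (zero_le_two.trans hq') 4]
    _ ≤ (q : ℤ) ^ 4 * (q : ℤ) ^ 4 := by gcongr
    _ = (q : ℤ) ^ 8 := by ring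

theorem card_pairs_eq_ncard_gramReps {R n : Type*} [CommRing R] [Fintype n]
    {Λ : Matrix (Fin 2) (Fin 2) R} (hΛ : Λ.IsSymm) :
    Nat.card {xy : (n → R) × (n → R) //
        xy.1 ⬝ᵥ xy.1 = Λ 0 0 ∧ xy.1 ⬝ᵥ xy.2 = Λ 0 1 ∧ xy.2 ⬝ᵥ xy.2 = Λ 1 1} =
      (gramReps Λ : Set (Matrix (Fin 2) n R)).ncard := by
  refine Nat.card_congr (((finTwoArrowEquiv (n → R)).symm.trans of).subtypeEquiv ?_)
  rintro ⟨x, y⟩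
  have hentries : of ![x, y] * (of ![x, y])ᵀ = !![x ⬝ᵥ x, x ⬝ᵥ y; x ⬝ᵥ y, y ⬝ᵥ y] := by
    ext i j
    fin_cases i <;> fin_cases j <;> first | rfl | exact dotProduct_comm y x
  change _ ↔ of ![x, y] * (of ![x, y])ᵀ = Λ
  rw [hentries, Λ.eta_fin_two, hΛ.apply 0 1]
  simp only [EmbeddingLike.apply_eq_iff_eq, vecCons_inj, and_true]
  tauto

end Total

/-- For every `ε > 0` there is `C > 0` such that for every integer `q > 1` and every
positive definite `Λ' ∈ M₂,₂(ℤ)` with all entries of absolute value at most `3q²`,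
the number of pairs `(x,y) ∈ (ℤ³)²` with `⟨x,x⟩ = Λ'₁₁`, `⟨x,y⟩ = Λ'₁₂`,
`⟨y,y⟩ = Λ'₂₂` is at most `C · q^ε · gcd(Λ'₁₁, Λ'₁₂, Λ'₂₂)`. -/
theorem pairs_le_gcd :
    ∀ ε : ℝ, 0 < ε → ∃ C : ℝ, 0 < C ∧ ∀ q : ℕ, 1 < q →
      ∀ Λ' : Matrix (Fin 2) (Fin 2) ℤ, Λ'.PosDef →
        (∀ i j, |Λ' i j| ≤ 3 * (q : ℤ) ^ 2) →
        (Nat.card {xy : (Fin 3 → ℤ) × (Fin 3 → ℤ) //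
            xy.1 ⬝ᵥ xy.1 = Λ' 0 0 ∧ xy.1 ⬝ᵥ xy.2 = Λ' 0 1 ∧ xy.2 ⬝ᵥ xy.2 = Λ' 1 1} : ℝ) ≤
          C * (q : ℝ) ^ ε * (Int.gcd (Int.gcd (Λ' 0 0) (Λ' 0 1)) (Λ' 1 1) : ℝ) := by
  intro ε hε
  obtain ⟨C, hC, hbound⟩ := exists_ncard_gramReps_le_rpow (div_pos hε (by norm_num : (0 : ℝ) < 8))
  refine ⟨C, hC, fun q hq Λ hΛ hΛq => ?_⟩
  rw [card_pairs_eq_ncard_gramReps (isHermitian_iff_isSymm.mp hΛ.isHermitian)]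
  calc ((gramReps Λ : Set (Matrix (Fin 2) (Fin 3) ℤ)).ncard : ℝ)
      ≤ C * (Λ.det.natAbs : ℝ) ^ (ε / 8) * content Λ := hbound Λ (det_pos_of_posDef hΛ).ne'
    _ ≤ C * ((q : ℝ) ^ 8) ^ (ε / 8) * content Λ := by
        gcongr
        exact_mod_cast det_natAbs_le_pow_eight hΛ hq hΛq
    _ = C * (q : ℝ) ^ ε * content Λ := by
        rw [← Real.rpow_natCast_mul q.cast_nonneg]
        congr 3
        push_cast
        ring
end

section
/- There exist a constant c > 0 and an integer q₀ such that for every integer q ≥ q₀ and all integers r₁, r₂, r₃ with 1 ≤ rᵢ ≤ q² and M_{rᵢ} ≥ q/2 for i = 1,2,3, the number of linearly independent triples (x,y,z) ∈ (ℤ³)³ with ⟨x,x⟩ = r₁, ⟨y,y⟩ = r₂, and ⟨z,z⟩ = r₃ is at least c · M_{r₁} · M_{r₂} · M_{r₃}. -/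
open Matrix

/-- `M r`: the number of lattice points on the sphere of radius `√r` centered at the
origin, i.e. `#{x ∈ ℤ³ : x₁² + x₂² + x₃² = r}`. -/
noncomputable def latticePointsOnSphere (r : ℕ) : ℕ :=
  Nat.card {x : Fin 3 → ℤ // x ⬝ᵥ x = (r : ℤ)}

/-!
The sphere `⟨x, x⟩ = r` is invariant under signed permutations of the coordinates, and this alone
keeps it from concentrating on a subspace. Let `W` be a proper subspace and choose a standard basis
vector `eᵢ ∉ W`. If `zᵢ ≠ 0`, then `z` and its reflection in the `i`-th coordinate differ by
`2 zᵢ eᵢ ∉ W`, so at most one of them is in `W`; and since coordinates can be exchanged, at least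
`1 / d` of the points in an invariant subset of `ℤᵈ ∖ {0}` have a nonzero `i`-th coordinate. Hence a
proportion of at least `1 / (2d)` of the points is off `W`. Choosing the vectors one at a time, each
off the span of the previous ones, gives the bound.
-/

namespace LatticeSphere

section Invariance

variable {ι α : Type*} [DecidableEq ι]

/-- Invariance of a set of vectors under the hyperoctahedral group of signed coordinate
permutations, expressed through its generators: the sign changes of one coordinate and the exchanges
of two. -/
structure IsHyperoctahedralInvariant [Neg α] (S : Set (ι → α)) : Prop where
  update_neg_mem : ∀ (i : ι), ∀ z ∈ S, Function.update z i (-z i) ∈ S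
  comp_swap_mem : ∀ (i j : ι), ∀ z ∈ S, z ∘ Equiv.swap i j ∈ S

lemma update_neg_involutive [InvolutiveNeg α] (i : ι) :
    Function.Involutive fun z : ι → α => Function.update z i (-z i) := by
  intro z
  simp

lemma sub_update_neg {R : Type*} [Ring R] (z : ι → R) (i : ι) :
    z - Function.update z i (-z i) = (2 * z i) • Pi.single i 1 := by
  ext j
  obtain rfl | hj := eq_or_ne j i
  · simp [two_mul]
  · simp [hj]

namespace IsHyperoctahedralInvariant

lemma image_comp {β : Type*} [AddGroup α] [AddGroup β] {S : Set (ι → α)}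
    (hS : IsHyperoctahedralInvariant S) (f : α →+ β) :
    IsHyperoctahedralInvariant ((fun z => f ∘ z) '' S) where
  update_neg_mem := by
    rintro i _ ⟨z, hz, rfl⟩
    exact ⟨_, hS.update_neg_mem i z hz, by simp [Function.comp_update]⟩
  comp_swap_mem := by
    rintro i j _ ⟨z, hz, rfl⟩
    exact ⟨_, hS.comp_swap_mem i j z hz, rfl⟩

lemma ncard_apply_ne_zero_le_two_mul_ncard_notMem {K : Type*} [DivisionRing K]
    [NeZero (2 : K)] {S : Set (ι → K)} (hS : IsHyperoctahedralInvariant S) (hfin : S.Finite)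
    {W : Submodule K (ι → K)} {i : ι} (hi : Pi.single i 1 ∉ W) :
    {z ∈ S | z i ≠ 0}.ncard ≤ 2 * {z ∈ S | z ∉ W}.ncard := by
  set flip : (ι → K) → ι → K := fun z => Function.update z i (-z i)
  have hflip : Function.Involutive flip := update_neg_involutive i
  have hoff : {z ∈ S | z ∉ W}.Finite := hfin.subset (Set.sep_subset _ _)
  have hcover : {z ∈ S | z i ≠ 0} ⊆ {z ∈ S | z ∉ W} ∪ flip '' {z ∈ S | z ∉ W} := by
    rintro z ⟨hz, hzi⟩
    by_cases hzW : z ∈ W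
    · refine Or.inr ⟨flip z, ⟨hS.update_neg_mem i z hz, fun hflipW => hi ?_⟩, hflip z⟩
      have hmem : (2 * z i) • Pi.single i 1 ∈ W := sub_update_neg z i ▸ W.sub_mem hzW hflipW
      exact (W.smul_mem_iff (mul_ne_zero two_ne_zero hzi)).mp hmem
    · exact Or.inl ⟨hz, hzW⟩
  calc {z ∈ S | z i ≠ 0}.ncard
      ≤ ({z ∈ S | z ∉ W} ∪ flip '' {z ∈ S | z ∉ W}).ncard :=
        Set.ncard_le_ncard hcover (hoff.union (hoff.image flip))
    _ ≤ {z ∈ S | z ∉ W}.ncard + (flip '' {z ∈ S | z ∉ W}).ncard := Set.ncard_union_le _ _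
    _ = 2 * {z ∈ S | z ∉ W}.ncard := by
        rw [Set.ncard_image_of_injective _ hflip.injective, two_mul]

lemma ncard_le_card_mul_ncard_apply_ne_zero [Fintype ι] [Neg α] [Zero α]
    {S : Set (ι → α)} (hS : IsHyperoctahedralInvariant S) (hfin : S.Finite) (h0 : 0 ∉ S)
    (i : ι) : S.ncard ≤ Fintype.card ι * {z ∈ S | z i ≠ 0}.ncard := by
  have hcover : S ⊆ ⋃ j, {z ∈ S | z j ≠ 0} := by
    intro z hz
    obtain ⟨j, hj⟩ := Function.ne_iff.mp (ne_of_mem_of_not_mem hz h0)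
    exact Set.mem_iUnion.mpr ⟨j, hz, hj⟩
  have hswap (j : ι) : {z ∈ S | z j ≠ 0}.ncard ≤ {z ∈ S | z i ≠ 0}.ncard := by
    refine Set.ncard_le_ncard_of_injOn (· ∘ Equiv.swap i j) ?_
      (Equiv.swap i j).surjective.injective_comp_right.injOn (hfin.subset (Set.sep_subset _ _))
    rintro z ⟨hz, hzj⟩
    exact ⟨hS.comp_swap_mem i j z hz, by simpa using hzj⟩
  calc S.ncard
      ≤ (⋃ j, {z ∈ S | z j ≠ 0}).ncard :=
        Set.ncard_le_ncard hcover (Set.finite_iUnion fun _ => hfin.subset (Set.sep_subset _ _))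
    _ ≤ ∑ j, {z ∈ S | z j ≠ 0}.ncard := Set.ncard_iUnion_le_of_fintype _
    _ ≤ ∑ _j : ι, {z ∈ S | z i ≠ 0}.ncard := Finset.sum_le_sum fun j _ => hswap j
    _ = Fintype.card ι * {z ∈ S | z i ≠ 0}.ncard := by simp

end IsHyperoctahedralInvariant

lemma exists_single_notMem_of_ne_top [Finite ι] {R : Type*} [Semiring R] {W : Submodule R (ι → R)}
    (hW : W ≠ ⊤) : ∃ i, Pi.single i 1 ∉ W := by
  by_contra! h
  refine hW (top_unique ?_)
  rw [← (Pi.basisFun R ι).span_eq, Submodule.span_le]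
  rintro _ ⟨i, rfl⟩
  simpa using h i

lemma IsHyperoctahedralInvariant.ncard_le_mul_ncard_notMem [Fintype ι] {K : Type*} [DivisionRing K]
    [NeZero (2 : K)] {S : Set (ι → K)} (hS : IsHyperoctahedralInvariant S) (hfin : S.Finite)
    (h0 : 0 ∉ S) {W : Submodule K (ι → K)} (hW : W ≠ ⊤) :
    S.ncard ≤ 2 * Fintype.card ι * {z ∈ S | z ∉ W}.ncard := by
  obtain ⟨i, hi⟩ := exists_single_notMem_of_ne_top hW
  calc S.ncard
      ≤ Fintype.card ι * {z ∈ S | z i ≠ 0}.ncard :=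
        hS.ncard_le_card_mul_ncard_apply_ne_zero hfin h0 i
    _ ≤ Fintype.card ι * (2 * {z ∈ S | z ∉ W}.ncard) := by
        gcongr
        exact hS.ncard_apply_ne_zero_le_two_mul_ncard_notMem hfin hi
    _ = 2 * Fintype.card ι * {z ∈ S | z ∉ W}.ncard := by ring

end Invariance

section Tuples

/-- The linearly independent tuples whose `i`-th vector is taken from the `i`-th set. -/
def linearIndependentTuples (K : Type*) {V : Type*} [Semiring K] [AddCommMonoid V] [Module K V]
    {κ : Type*} (S : κ → Set V) : Set (κ → V) :=
  {v | LinearIndependent K v ∧ ∀ i, v i ∈ S i}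

lemma finite_linearIndependentTuples (K : Type*) {V : Type*} [Semiring K] [AddCommMonoid V]
    [Module K V] {κ : Type*} [Finite κ] {S : κ → Set V} (hS : ∀ i, (S i).Finite) :
    (linearIndependentTuples K S).Finite :=
  (Set.Finite.pi' hS).subset fun _ hv => hv.2

lemma linearIndependentTuples_image (K : Type*) {V V' : Type*} [Semiring K] [AddCommMonoid V']
    [Module K V'] (f : V → V') {κ : Type*} (S : κ → Set V) :
    linearIndependentTuples K (fun i => f '' S i) =
      (f ∘ ·) '' {v | LinearIndependent K (f ∘ v) ∧ ∀ i, v i ∈ S i} := by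
  ext w
  constructor
  · rintro ⟨hw, hmem⟩
    choose v hv hvw using hmem
    obtain rfl : f ∘ v = w := funext hvw
    exact ⟨v, ⟨hw, hv⟩, rfl⟩
  · rintro ⟨v, ⟨hv, hmem⟩, rfl⟩
    exact ⟨hv, fun i => Set.mem_image_of_mem f (hmem i)⟩

variable {K V : Type*} [DivisionRing K] [AddCommGroup V] [Module K V]

lemma ncard_mul_ncard_linearIndependentTuples_le {k C : ℕ} {S : Fin (k + 1) → Set V}
    (hfin : ∀ i, (S i).Finite)
    (hC : ∀ v : Fin k → V,
      (S 0).ncard ≤ C * {x ∈ S 0 | x ∉ Submodule.span K (Set.range v)}.ncard) :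
    (S 0).ncard * (linearIndependentTuples K (Fin.tail S)).ncard ≤
      C * (linearIndependentTuples K S).ncard := by
  set T := linearIndependentTuples K (Fin.tail S)
  set offSpan : T → Set V := fun v => {x ∈ S 0 | x ∉ Submodule.span K (Set.range v.1)}
  have : Fintype T := (finite_linearIndependentTuples K fun i : Fin k => hfin i.succ).fintype
  have (v : T) : Finite (offSpan v) := (hfin 0).subset (Set.sep_subset _ _)
  have : Finite (linearIndependentTuples K S) := finite_linearIndependentTuples K hfin
  let extend : (Σ v : T, offSpan v) → linearIndependentTuples K S := fun p =>
    ⟨Fin.cons p.2 p.1, linearIndependent_finCons.mpr ⟨p.1.2.1, p.2.2.2⟩,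
      Fin.cases p.2.2.1 p.1.2.2⟩
  have hextend : Function.Injective extend := by
    rintro ⟨⟨v, hv⟩, x, hx⟩ ⟨⟨w, hw⟩, y, hy⟩ h
    obtain ⟨rfl, rfl⟩ := Fin.cons_inj (α := fun _ => V).mp (congrArg Subtype.val h)
    rfl
  calc (S 0).ncard * T.ncard
      = ∑ _v : T, (S 0).ncard := by
        rw [Finset.sum_const, Finset.card_univ, ← Nat.card_eq_fintype_card, Nat.card_coe_set_eq,
          smul_eq_mul, mul_comm]
    _ ≤ ∑ v : T, C * (offSpan v).ncard := Finset.sum_le_sum fun v _ => hC v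
    _ = C * Nat.card (Σ v : T, offSpan v) := by
        simp only [Nat.card_sigma, Nat.card_coe_set_eq, Finset.mul_sum]
    _ ≤ C * (linearIndependentTuples K S).ncard :=
        Nat.mul_le_mul_left C (Nat.card_le_card_of_injective extend hextend)

lemma span_range_ne_top_of_lt_finrank {k : ℕ} (hk : k < Module.finrank K V) (v : Fin k → V) :
    Submodule.span K (Set.range v) ≠ ⊤ := by
  intro h
  have hle := finrank_range_le_card (R := K) v
  rw [Set.finrank, h, finrank_top, Fintype.card_fin] at hle
  exact hk.not_ge hle

lemma prod_ncard_le_mul_ncard_linearIndependentTuples {ι : Type*} [Fintype ι] [DecidableEq ι]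
    [NeZero (2 : K)] {k : ℕ} (hk : k ≤ Fintype.card ι) {S : Fin k → Set (ι → K)}
    (hS : ∀ i, IsHyperoctahedralInvariant (S i)) (hfin : ∀ i, (S i).Finite) (h0 : ∀ i, 0 ∉ S i) :
    ∏ i, (S i).ncard ≤ (2 * Fintype.card ι) ^ k * (linearIndependentTuples K S).ncard := by
  induction k with
  | zero => simp [linearIndependentTuples]
  | succ k ih =>
    have hoff (v : Fin k → ι → K) : (S 0).ncard ≤
        2 * Fintype.card ι * {x ∈ S 0 | x ∉ Submodule.span K (Set.range v)}.ncard :=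
      (hS 0).ncard_le_mul_ncard_notMem (hfin 0) (h0 0)
        (span_range_ne_top_of_lt_finrank (by simpa using hk) v)
    calc ∏ i, (S i).ncard
        = (S 0).ncard * ∏ i, (Fin.tail S i).ncard := Fin.prod_univ_succ _
      _ ≤ (S 0).ncard *
            ((2 * Fintype.card ι) ^ k * (linearIndependentTuples K (Fin.tail S)).ncard) := by
          gcongr
          exact ih (by lia) (fun i => hS i.succ) (fun i => hfin i.succ) fun i => h0 i.succ
      _ = (2 * Fintype.card ι) ^ k *
            ((S 0).ncard * (linearIndependentTuples K (Fin.tail S)).ncard) := by ring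
      _ ≤ (2 * Fintype.card ι) ^ k *
            (2 * Fintype.card ι * (linearIndependentTuples K S).ncard) :=
          Nat.mul_le_mul_left _ (ncard_mul_ncard_linearIndependentTuples_le hfin hoff)
      _ = (2 * Fintype.card ι) ^ (k + 1) * (linearIndependentTuples K S).ncard := by ring

end Tuples

section Sphere

variable {ι R : Type*} [Fintype ι]

/-- The vectors with coordinates in `R` and squared norm `a`; over `ℤ`, these are the lattice points
on the sphere of radius `√a`. -/
def sqNormSphere (ι : Type*) [Fintype ι] [Mul R] [AddCommMonoid R] (a : R) : Set (ι → R) :=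
  {x | x ⬝ᵥ x = a}

lemma isHyperoctahedralInvariant_sqNormSphere [DecidableEq ι] [NonUnitalNonAssocRing R] (a : R) :
    IsHyperoctahedralInvariant (sqNormSphere ι a) where
  update_neg_mem i z hz := by
    rw [← hz.out]
    refine Finset.sum_congr rfl fun j _ => ?_
    obtain rfl | hj := eq_or_ne j i
    · simp
    · simp [hj]
  comp_swap_mem i j z hz := (comp_equiv_dotProduct_comp_equiv z z (Equiv.swap i j)).trans hz

lemma zero_notMem_sqNormSphere [NonUnitalNonAssocSemiring R] {a : R} (ha : a ≠ 0) :
    0 ∉ sqNormSphere ι a :=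
  fun h => ha (h.out.symm.trans (zero_dotProduct 0))

lemma finite_sqNormSphere (a : ℤ) : (sqNormSphere ι a).Finite := by
  classical
  refine (Set.finite_Icc (fun _ : ι => -a) fun _ => a).subset fun x hx => ?_
  have hsq (i : ι) : x i * x i ≤ a :=
    hx.out ▸ Finset.single_le_sum (f := fun j => x j * x j)
      (fun j _ => mul_self_nonneg (x j)) (Finset.mem_univ i)
  have habs (i : ι) : |x i| ≤ a :=
    (Int.le_self_sq |x i|).trans (by simpa [sq] using hsq i)
  exact ⟨fun i => (abs_le.mp (habs i)).1, fun i => (abs_le.mp (habs i)).2⟩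

end Sphere

lemma latticePointsOnSphere_eq_ncard (r : ℕ) :
    latticePointsOnSphere r = (sqNormSphere (Fin 3) (r : ℤ)).ncard :=
  Nat.card_coe_set_eq _

/-- A vector indexed by `Fin 3`, as a triple. -/
def finThreeArrowEquiv (α : Type*) : (Fin 3 → α) ≃ α × α × α where
  toFun v := (v 0, v 1, v 2)
  invFun t := ![t.1, t.2.1, t.2.2]
  left_inv v := by ext i; fin_cases i <;> rfl
  right_inv _ := rfl

lemma card_subtype_triple_eq_ncard {α : Type*} (p : (Fin 3 → α) → Prop) (q : Fin 3 → α → Prop) :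
    Nat.card {t : α × α × α // p ![t.1, t.2.1, t.2.2] ∧ q 0 t.1 ∧ q 1 t.2.1 ∧ q 2 t.2.2} =
      {v : Fin 3 → α | p v ∧ ∀ i, q i (v i)}.ncard := by
  rw [← Nat.card_coe_set_eq]
  refine Nat.card_congr ((finThreeArrowEquiv α).symm.subtypeEquiv fun t => ?_)
  simp only [Fin.forall_fin_succ, Fin.forall_fin_zero]
  simp [finThreeArrowEquiv, Equiv.symm]

end LatticeSphere

open LatticeSphere

theorem many_nondegenerate_triples_general {ι : Type*} [Fintype ι] {k : ℕ}
    (hk : k ≤ Fintype.card ι) {r : Fin k → ℤ} (hr : ∀ i, r i ≠ 0) :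
    ∏ i, (sqNormSphere ι (r i)).ncard ≤
      (2 * Fintype.card ι) ^ k *
        {v : Fin k → ι → ℤ | LinearIndependent ℚ (fun i j => (v i j : ℚ)) ∧
          ∀ i, v i ⬝ᵥ v i = r i}.ncard := by
  classical
  set toRat : (ι → ℤ) → ι → ℚ := fun z => Int.castAddHom ℚ ∘ z
  have htoRat : Function.Injective toRat := Function.Injective.comp_left Int.cast_injective
  have htoRatTuple : Function.Injective fun v : Fin k → ι → ℤ => toRat ∘ v := htoRat.comp_left
  have h0 (i : Fin k) : 0 ∉ toRat '' sqNormSphere ι (r i) := by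
    rintro ⟨z, hz, hz0⟩
    obtain rfl : z = 0 := htoRat (hz0.trans (by ext; simp [toRat]))
    exact zero_notMem_sqNormSphere (hr i) hz
  have hbound := prod_ncard_le_mul_ncard_linearIndependentTuples hk
    (S := fun i => toRat '' sqNormSphere ι (r i))
    (fun i => (isHyperoctahedralInvariant_sqNormSphere (r i)).image_comp (Int.castAddHom ℚ))
    (fun i => (finite_sqNormSphere (r i)).image toRat) h0
  simp only [linearIndependentTuples_image, Set.ncard_image_of_injective _ htoRatTuple,
    Set.ncard_image_of_injective _ htoRat] at hbound
  exact hbound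

/-- There exist `c > 0` and `q₀` such that for all `q ≥ q₀` and all `1 ≤ r₁,r₂,r₃ ≤ q²`
with `M_{rᵢ} ≥ q/2`, the number of linearly independent triples `(x,y,z) ∈ (ℤ³)³` with
`⟨x,x⟩ = r₁`, `⟨y,y⟩ = r₂`, `⟨z,z⟩ = r₃` is at least `c · M_{r₁} · M_{r₂} · M_{r₃}`. -/
theorem many_nondegenerate_triples :
    ∃ c : ℝ, 0 < c ∧ ∃ q₀ : ℕ, ∀ q : ℕ, q₀ ≤ q →
      ∀ r₁ r₂ r₃ : ℕ,
        (1 ≤ r₁ ∧ r₁ ≤ q ^ 2 ∧ (q : ℝ) / 2 ≤ (latticePointsOnSphere r₁ : ℝ)) →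
        (1 ≤ r₂ ∧ r₂ ≤ q ^ 2 ∧ (q : ℝ) / 2 ≤ (latticePointsOnSphere r₂ : ℝ)) →
        (1 ≤ r₃ ∧ r₃ ≤ q ^ 2 ∧ (q : ℝ) / 2 ≤ (latticePointsOnSphere r₃ : ℝ)) →
        c * (latticePointsOnSphere r₁ : ℝ) * (latticePointsOnSphere r₂ : ℝ) *
            (latticePointsOnSphere r₃ : ℝ) ≤
          (Nat.card {t : (Fin 3 → ℤ) × (Fin 3 → ℤ) × (Fin 3 → ℤ) //
            LinearIndependent ℚ (fun i : Fin 3 =>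
              fun j => ((![t.1, t.2.1, t.2.2] i j : ℚ))) ∧
            t.1 ⬝ᵥ t.1 = (r₁ : ℤ) ∧ t.2.1 ⬝ᵥ t.2.1 = (r₂ : ℤ) ∧
            t.2.2 ⬝ᵥ t.2.2 = (r₃ : ℤ)} : ℝ) := by
  refine ⟨1 / 216, by norm_num, 0, ?_⟩
  rintro q - r₁ r₂ r₃ ⟨h₁, -⟩ ⟨h₂, -⟩ ⟨h₃, -⟩
  have hr : ∀ i, (![r₁, r₂, r₃] i : ℤ) ≠ 0 := by
    simp [Fin.forall_fin_succ, Nat.ne_of_gt h₁, Nat.ne_of_gt h₂, Nat.ne_of_gt h₃]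
  have hcount := many_nondegenerate_triples_general (Fintype.card_fin 3).ge hr
  rw [← card_subtype_triple_eq_ncard
      (fun v : Fin 3 → Fin 3 → ℤ => LinearIndependent ℚ fun i j => (v i j : ℚ))
      fun i z => z ⬝ᵥ z = ![r₁, r₂, r₃] i,
    Fin.prod_univ_three, Fintype.card_fin, ← @Nat.cast_le ℝ] at hcount
  push_cast at hcount
  simp only [latticePointsOnSphere_eq_ncard]
  linarith
end
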